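/- Let C ⊆ ℝ be bounded from below and have zero lower box-counting dimension in the extended sense, i.e. dim_B^-(C ∩ [-a,a]) = 0 for every a > 0. Then for every integer d ≥ 1, the d-fold Minkowski sum C^{(d)} = C + ⋯ + C also satisfies dim_B^-(C^{(d)} ∩ [-a,a]) = 0 for every a > 0. -/

import Mathlib

open Set Filter

/-- `coverN ε S` is the minimal number of intervals of length `ε` needed to cover `S`. -/
noncomputable def coverN (ε : ℝ) (S : Set ℝ) : ℕ :=
  sInf {n : ℕ | ∃ f : Fin n → ℝ, S ⊆ ⋃ i, Icc (f i) (f i + ε)}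

/-- The lower box-counting dimension of a set `S ⊆ ℝ`. -/
noncomputable def lowerBoxDim (S : Set ℝ) : ℝ :=
  liminf (fun ε : ℝ => Real.log (coverN ε S) / Real.log ε⁻¹) (nhdsWithin 0 (Ioi 0))

/-- The `d`-fold Minkowski sum `C + C + ⋯ + C`. -/
def nFoldSum (d : ℕ) (C : Set ℝ) : Set ℝ :=
  {x | ∃ c : Fin d → ℝ, (∀ i, c i ∈ C) ∧ x = ∑ i, c i}

lemma coverN_le_card {ι : Type} [Fintype ι] (ε : ℝ) (S : Set ℝ) (f : ι → ℝ)
    (h : ∀ x ∈ S, ∃ i, f i ≤ x ∧ x ≤ f i + ε) : coverN ε S ≤ Fintype.card ι := by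
  apply Nat.sInf_le
  refine ⟨fun j => f ((Fintype.equivFin ι).symm j), fun x hx => ?_⟩
  obtain ⟨i, h1, h2⟩ := h x hx
  rw [mem_iUnion]
  exact ⟨Fintype.equivFin ι i, by simpa using h1, by simpa using h2⟩

lemma exists_step (ε : ℝ) (d : ℕ) (y : ℝ) (h0 : 0 ≤ y) (hy : y ≤ (d + 1 : ℕ) * ε) :
    ∃ k : Fin (d + 1), (k : ℕ) * ε ≤ y ∧ y ≤ (k : ℕ) * ε + ε := by
  induction d with
  | zero => exact ⟨0, by simpa using h0, by simpa using hy⟩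
  | succ d ih =>
    by_cases h : y ≤ (d + 1 : ℕ) * ε
    · obtain ⟨k, h1, h2⟩ := ih h
      exact ⟨k.castSucc, by simpa using h1, by simpa using h2⟩
    · refine ⟨Fin.last (d + 1), ?_, ?_⟩
      · simpa using (not_le.1 h).le
      · rw [Fin.val_last]
        push_cast at hy ⊢
        linarith

lemma bdd_cover (ε b : ℝ) (hε : 0 < ε) (hb : 0 < b) (x : ℝ) (hx : x ∈ Icc (-b) b) :
    ∃ i : Fin (⌊2 * b / ε⌋₊ + 1), (-b + (i : ℕ) * ε) ≤ x ∧ x ≤ (-b + (i : ℕ) * ε) + ε := by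
  have h := Nat.lt_floor_add_one (2 * b / ε)
  rw [div_lt_iff₀ hε] at h
  obtain ⟨k, h1, h2⟩ := exists_step ε ⌊2 * b / ε⌋₊ (x + b) (by linarith [hx.1])
    (by push_cast; linarith [hx.2])
  exact ⟨k, by linarith, by linarith⟩

lemma coverN_bdd (ε b : ℝ) (hε : 0 < ε) (hb : 0 < b) (S : Set ℝ) (hS : S ⊆ Icc (-b) b) :
    (coverN ε S : ℝ) ≤ 2 * b / ε + 1 := by
  have h := coverN_le_card ε S (fun i : Fin (⌊2 * b / ε⌋₊ + 1) => -b + (i : ℕ) * ε)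
    (fun x hx => bdd_cover ε b hε hb x (hS hx))
  rw [Fintype.card_fin] at h
  have h' : (coverN ε S : ℝ) ≤ (⌊2 * b / ε⌋₊ : ℝ) + 1 := by exact_mod_cast h
  have := Nat.floor_le (a := 2 * b / ε) (by positivity)
  linarith

lemma coverN_spec (ε b : ℝ) (hε : 0 < ε) (hb : 0 < b) (S : Set ℝ) (hS : S ⊆ Icc (-b) b) :
    ∃ f : Fin (coverN ε S) → ℝ, S ⊆ ⋃ i, Icc (f i) (f i + ε) := by
  have : (coverN ε S) ∈ {n : ℕ | ∃ f : Fin n → ℝ, S ⊆ ⋃ i, Icc (f i) (f i + ε)} := by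
    apply Nat.sInf_mem
    refine ⟨⌊2 * b / ε⌋₊ + 1, fun i => -b + (i : ℕ) * ε, fun x hx => ?_⟩
    rw [mem_iUnion]
    exact bdd_cover ε b hε hb x (hS hx)
  exact this

lemma coverN_sum (C : Set ℝ) (m a : ℝ) (hm : ∀ x ∈ C, -m ≤ x) (hm0 : 0 < m) (ha : 0 < a)
    (d : ℕ) (hd : 1 ≤ d) (ε : ℝ) (hε : 0 < ε) :
    coverN ε (nFoldSum d C ∩ Icc (-a) a) ≤
      coverN ε (C ∩ Icc (-(a + d * m)) (a + d * m)) ^ d * d := by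
  have hdm : 0 ≤ (d : ℝ) * m := by positivity
  have hd1 : (1 : ℝ) ≤ d := by exact_mod_cast hd
  obtain ⟨f, hf⟩ := coverN_spec ε (a + d * m) hε (by linarith) _
    (inter_subset_right (s := C) (t := Icc (-(a + d * m)) (a + d * m)))
  generalize coverN ε (C ∩ Icc (-(a + d * m)) (a + d * m)) = n at f hf ⊢
  have key := coverN_le_card ε (nFoldSum d C ∩ Icc (-a) a)
    (fun p : (Fin d → Fin n) × Fin d => ∑ i, f (p.1 i) + (p.2 : ℕ) * ε) ?_
  · simpa using key
  rintro x ⟨⟨c, hc, rfl⟩, hx1, hx2⟩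
  have hb : ∀ i, c i ∈ C ∩ Icc (-(a + d * m)) (a + d * m) := by
    intro i
    refine ⟨hc i, ?_, ?_⟩
    · have := hm _ (hc i)
      nlinarith
    · have h1 : c i + m ≤ ∑ j, (c j + m) :=
        Finset.single_le_sum (f := fun j => c j + m)
          (fun j _ => by linarith [hm _ (hc j)]) (Finset.mem_univ i)
      rw [Finset.sum_add_distrib] at h1
      simp at h1
      linarith
  have hs : ∀ i, ∃ k, f k ≤ c i ∧ c i ≤ f k + ε := by
    intro i
    have := hf (hb i)
    rw [mem_iUnion] at this
    exact this
  choose s hs1 hs2 using hs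
  have e1 : ∑ i, f (s i) ≤ ∑ i, c i := Finset.sum_le_sum fun i _ => hs1 i
  have e2 : ∑ i, c i ≤ ∑ i, (f (s i) + ε) := Finset.sum_le_sum fun i _ => hs2 i
  rw [Finset.sum_add_distrib] at e2
  simp at e2
  obtain ⟨d, rfl⟩ : ∃ e, d = e + 1 := ⟨d - 1, by omega⟩
  obtain ⟨k, k1, k2⟩ := exists_step ε d (∑ i, c i - ∑ i, f (s i)) (by linarith)
    (by push_cast at e2 ⊢; linarith)
  exact ⟨(s, k), by dsimp only; linarith, by dsimp only; linarith⟩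

lemma ev_pos : ∀ᶠ ε : ℝ in nhdsWithin 0 (Ioi 0), 0 < ε := self_mem_nhdsWithin

lemma ev_lt (c : ℝ) (hc : 0 < c) : ∀ᶠ ε : ℝ in nhdsWithin 0 (Ioi 0), ε < c :=
  mem_nhdsWithin_of_mem_nhds (Iio_mem_nhds hc)

lemma log_inv_pos {ε : ℝ} (h0 : 0 < ε) (h1 : ε < 1) : 0 < Real.log ε⁻¹ :=
  Real.log_pos ((one_lt_inv₀ h0).2 h1)

lemma ratio_nonneg (S : Set ℝ) : ∀ᶠ ε : ℝ in nhdsWithin 0 (Ioi 0),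
    0 ≤ Real.log (coverN ε S) / Real.log ε⁻¹ := by
  filter_upwards [ev_pos, ev_lt 1 one_pos] with ε h0 h1
  exact div_nonneg (Real.log_natCast_nonneg _) (log_inv_pos h0 h1).le

lemma ratio_le (S : Set ℝ) (b : ℝ) (hb : 0 < b) (hS : S ⊆ Icc (-b) b) :
    ∀ᶠ ε : ℝ in nhdsWithin 0 (Ioi 0), Real.log (coverN ε S) / Real.log ε⁻¹ ≤ 2 := by
  filter_upwards [ev_pos, ev_lt 1 one_pos, ev_lt (2 * b + 1)⁻¹ (by positivity)] with ε h0 h1 h2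
  rw [div_le_iff₀ (log_inv_pos h0 h1)]
  rcases Nat.eq_zero_or_pos (coverN ε S) with h | h
  · rw [h]
    simp only [Nat.cast_zero, Real.log_zero]
    linarith [log_inv_pos h0 h1]
  · have hb1 : 2 * b + 1 ≤ ε⁻¹ := by
      rw [le_inv_comm₀ (by positivity) h0]; exact h2.le
    have h3 : (1 : ℝ) ≤ ε⁻¹ := ((one_lt_inv₀ h0).2 h1).le
    have h4 := coverN_bdd ε b h0 hb S hS
    have h5 : (coverN ε S : ℝ) ≤ ε⁻¹ ^ 2 := by
      rw [div_eq_mul_inv] at h4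
      nlinarith
    calc Real.log (coverN ε S) ≤ Real.log (ε⁻¹ ^ 2) :=
          Real.log_le_log (by exact_mod_cast h) h5
      _ = 2 * Real.log ε⁻¹ := by rw [Real.log_pow]; norm_num

lemma freq_lt (S : Set ℝ) (b : ℝ) (hb : 0 < b) (hS : S ⊆ Icc (-b) b)
    (h : lowerBoxDim S = 0) (δ : ℝ) (hδ : 0 < δ) :
    ∃ᶠ ε : ℝ in nhdsWithin 0 (Ioi 0), Real.log (coverN ε S) / Real.log ε⁻¹ < δ := by
  intro hn
  have hn' : ∀ᶠ ε : ℝ in nhdsWithin 0 (Ioi 0),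
      δ ≤ Real.log (coverN ε S) / Real.log ε⁻¹ := by
    filter_upwards [hn] with ε h using not_lt.1 h
  unfold lowerBoxDim at h
  rw [liminf_eq] at h
  have : δ ≤ 0 := by
    rw [← h]
    refine le_csSup ⟨2, ?_⟩ hn'
    intro x hx
    rw [mem_setOf_eq] at hx
    obtain ⟨ε, h1, h2⟩ := ((ratio_le S b hb hS).and hx).exists
    exact h2.trans h1
  linarith

lemma dim_zero (S : Set ℝ)
    (h : ∀ δ : ℝ, 0 < δ → ∃ᶠ ε : ℝ in nhdsWithin 0 (Ioi 0),
      Real.log (coverN ε S) / Real.log ε⁻¹ < δ) : lowerBoxDim S = 0 := by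
  unfold lowerBoxDim
  rw [liminf_eq]
  refine IsGreatest.csSup_eq ⟨ratio_nonneg S, ?_⟩
  intro x hx
  refine le_of_forall_pos_le_add fun δ hδ => ?_
  obtain ⟨ε, h1, h2⟩ := ((h δ hδ).and_eventually hx).exists
  linarith [h2]

theorem stmt1 (C : Set ℝ) (hC : BddBelow C)
    (hdim : ∀ a : ℝ, 0 < a → lowerBoxDim (C ∩ Icc (-a) a) = 0) :
    ∀ d : ℕ, 1 ≤ d → ∀ a : ℝ, 0 < a →
      lowerBoxDim (nFoldSum d C ∩ Icc (-a) a) = 0 := by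
  intro d hd a ha
  obtain ⟨m, hm0, hm⟩ : ∃ m : ℝ, 0 < m ∧ ∀ x ∈ C, -m ≤ x := by
    obtain ⟨l, hl⟩ := hC
    refine ⟨|l| + 1, by positivity, fun x hx => ?_⟩
    linarith [hl hx, neg_abs_le l]
  have hb : 0 < a + d * m := by positivity
  have hd1 : (1 : ℝ) ≤ d := by exact_mod_cast hd
  have hd0 : (0 : ℝ) < d := by linarith
  apply dim_zero
  intro δ hδ
  have hlim : ∀ᶠ ε : ℝ in nhdsWithin 0 (Ioi 0), Real.log d / Real.log ε⁻¹ < δ / 2 :=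
    ((Real.tendsto_log_atTop.comp tendsto_inv_nhdsGT_zero).const_div_atTop
      (Real.log d)).eventually (gt_mem_nhds (by positivity : (0 : ℝ) < δ / 2))
  refine ((freq_lt _ _ hb inter_subset_right (hdim _ hb) (δ / (2 * d))
    (by positivity)).and_eventually
    (hlim.and (ev_pos.and (ev_lt 1 one_pos)))).mono ?_
  rintro ε ⟨h1, h2, h3, h4⟩
  have hL := log_inv_pos h3 h4
  have hN := coverN_sum C m a hm hm0 ha d hd ε h3
  set n := coverN ε (C ∩ Icc (-(a + d * m)) (a + d * m))
  set N := coverN ε (nFoldSum d C ∩ Icc (-a) a)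
  rcases Nat.eq_zero_or_pos N with h | h
  · rw [h]; simpa using hδ
  · have hn : n ≠ 0 := by
      intro h0
      rw [h0, zero_pow (by omega)] at hN
      omega
    have hn' : (n : ℝ) ≠ 0 := by exact_mod_cast hn
    have e : Real.log N ≤ d * Real.log n + Real.log d := by
      rw [← Real.log_pow, ← Real.log_mul (by positivity) hd0.ne']
      exact Real.log_le_log (by exact_mod_cast h) (by exact_mod_cast hN)
    rw [div_lt_iff₀ hL] at h1 h2 ⊢
    have h5 : d * Real.log n < d * (δ / (2 * d) * Real.log ε⁻¹) :=
      mul_lt_mul_of_pos_left h1 hd0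
    have h6 : d * (δ / (2 * d) * Real.log ε⁻¹) = δ / 2 * Real.log ε⁻¹ := by
      field_simp
    linarith
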